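/- arXiv:1412.8143 — 7 statements merged into one kernel-verified Lean document; each statement's English description precedes it below -/
import Mathlib

section
/- Let a < b be real numbers, let r : ℝ → ℝ be twice differentiable and strictly positive on [a,b] and satisfy the catenary (minimal surface of revolution) equation r'(z)² + 1 − r''(z)·r(z) = 0 for all z ∈ (a,b), and let φ : ℝ → ℝ be twice differentiable on (a,b) with 0 < φ(z) < 1, φ'(z) < 0 and φ''(z) < 0 for all z ∈ (a,b). Then the function ρ := r·φ satisfies 1 + ρ'(z)² − ρ''(z)·ρ(z) > 0 for every z ∈ (a,b). -/
open Real Set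

/-- Bending a catenoid (profile `r` solving `r'² + 1 - r''·r = 0`) by a decreasing
concave factor `φ` with values in `(0,1)` keeps the quantity
`1 + ρ'² - ρ''·ρ` (a positive multiple of the mean curvature of the resulting
surface of revolution) strictly positive. -/
theorem bent_catenoid_mean_convex
    (a b : ℝ) (hab : a < b) (r φ : ℝ → ℝ)
    (hr : ∀ z ∈ Icc a b, DifferentiableAt ℝ r z)
    (hr' : ∀ z ∈ Icc a b, DifferentiableAt ℝ (deriv r) z)
    (hrpos : ∀ z ∈ Icc a b, 0 < r z)
    (hcat : ∀ z ∈ Ioo a b, (deriv r z) ^ 2 + 1 - deriv (deriv r) z * r z = 0)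
    (hφ : ∀ z ∈ Ioo a b, DifferentiableAt ℝ φ z)
    (hφ' : ∀ z ∈ Ioo a b, DifferentiableAt ℝ (deriv φ) z)
    (hφpos : ∀ z ∈ Ioo a b, 0 < φ z)
    (hφlt : ∀ z ∈ Ioo a b, φ z < 1)
    (hφdec : ∀ z ∈ Ioo a b, deriv φ z < 0)
    (hφconc : ∀ z ∈ Ioo a b, deriv (deriv φ) z < 0) :
    ∀ z ∈ Ioo a b,
      0 < 1 + (deriv (fun w => r w * φ w) z) ^ 2
          - deriv (deriv (fun w => r w * φ w)) z * (r z * φ z) := by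
  intro z hz
  have hzI : z ∈ Icc a b := Ioo_subset_Icc_self hz
  have h1 : ∀ w ∈ Ioo a b,
      deriv (fun w => r w * φ w) w = deriv r w * φ w + r w * deriv φ w := fun w hw =>
    ((hr w (Ioo_subset_Icc_self hw)).hasDerivAt.mul (hφ w hw).hasDerivAt).deriv
  have h2 : deriv (fun w => r w * φ w) =ᶠ[nhds z]
      fun w => deriv r w * φ w + r w * deriv φ w :=
    Filter.eventually_of_mem (isOpen_Ioo.mem_nhds hz) h1
  have h3 : deriv (deriv (fun w => r w * φ w)) z =
      (deriv (deriv r) z * φ z + deriv r z * deriv φ z)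
        + (deriv r z * deriv φ z + r z * deriv (deriv φ) z) := by
    rw [h2.deriv_eq]
    exact (((hr' z hzI).hasDerivAt.mul (hφ z hz).hasDerivAt).add
      ((hr z hzI).hasDerivAt.mul (hφ' z hz).hasDerivAt)).deriv
  rw [h3, h1 z hz]
  have hc := hcat z hz
  have hp := hφpos z hz
  have hl := hφlt z hz
  have hcc := hφconc z hz
  have e1 : 0 < 1 - φ z ^ 2 := by nlinarith
  have e2 : 0 ≤ (r z * deriv φ z) ^ 2 := sq_nonneg _
  have e3 : 0 ≤ r z ^ 2 * (φ z * -deriv (deriv φ) z) :=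
    mul_nonneg (sq_nonneg _) (mul_nonneg hp.le (by linarith))
  linear_combination e1 + e2 + e3 - φ z ^ 2 * hc
end

section
/- Define H : ℝ → ℝ by H(u) = 1/(1 + sin²u)^{3/2} + cos u/((3 + 2cos u)·√(1 + sin²u)). Then 5 + 2cos u − cos(2u) > 0 for all u, H(u) ≥ 0 for all real u, and H(u) = 0 if and only if u = π + 2kπ for some integer k. -/
open Real

lemma H_formula (u : ℝ) : 1 / (1 + Real.sin u ^ 2) ^ ((3:ℝ)/2)
        + Real.cos u / ((3 + 2 * Real.cos u) * Real.sqrt (1 + Real.sin u ^ 2))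
      = (1 + Real.cos u) * ((3 + Real.cos u - Real.cos u ^ 2)
        / ((3 + 2 * Real.cos u) * Real.sqrt (1 + Real.sin u ^ 2) ^ 3)) := by
  have hp : 0 < 1 + Real.sin u ^ 2 := by positivity
  have h1 : (1 + Real.sin u ^ 2) ^ ((3:ℝ)/2) = Real.sqrt (1 + Real.sin u ^ 2) ^ 3 := by
    generalize 1 + Real.sin u ^ 2 = x at *
    rw [Real.sqrt_eq_rpow, ← Real.rpow_natCast, ← Real.rpow_mul hp.le]
    norm_num
  have hs : 0 < Real.sqrt (1 + Real.sin u ^ 2) := Real.sqrt_pos.2 hp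
  have hq : Real.sqrt (1 + Real.sin u ^ 2) ^ 2 = 2 - Real.cos u ^ 2 := by
    rw [Real.sq_sqrt hp.le, Real.sin_sq]; ring
  have hc : 0 < 3 + 2 * Real.cos u := by linarith [Real.neg_one_le_cos u]
  rw [h1]
  generalize Real.sqrt (1 + Real.sin u ^ 2) = r at *
  have e : Real.cos u / ((3 + 2 * Real.cos u) * r)
      = Real.cos u * r ^ 2 / ((3 + 2 * Real.cos u) * r ^ 3) := by
    field_simp
  have e' : 1 / r ^ 3 = (3 + 2 * Real.cos u) / ((3 + 2 * Real.cos u) * r ^ 3) := by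
    field_simp
  rw [e, e', hq, ← add_div, mul_div_assoc']
  congr 1
  ring

lemma factor_pos (u : ℝ) : 0 < 3 + Real.cos u - Real.cos u ^ 2 := by
  nlinarith [Real.neg_one_le_cos u, Real.cos_le_one u]

lemma quot_pos (u : ℝ) : 0 < (3 + Real.cos u - Real.cos u ^ 2)
        / ((3 + 2 * Real.cos u) * Real.sqrt (1 + Real.sin u ^ 2) ^ 3) := by
  have hs : 0 < Real.sqrt (1 + Real.sin u ^ 2) := Real.sqrt_pos.2 (by positivity)
  have hc : 0 < 3 + 2 * Real.cos u := by linarith [Real.neg_one_le_cos u]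
  exact div_pos (factor_pos u) (by positivity)

/-- The mean curvature of the torus of revolution with elliptic section is
nonnegative and vanishes exactly along the inner equator `u = π (mod 2π)`. -/
theorem torus_mean_curvature_nonneg_and_zero_set :
    (∀ u : ℝ, 0 < 5 + 2 * Real.cos u - Real.cos (2 * u)) ∧
    (∀ u : ℝ, 0 ≤ 1 / (1 + Real.sin u ^ 2) ^ ((3:ℝ)/2)
        + Real.cos u / ((3 + 2 * Real.cos u) * Real.sqrt (1 + Real.sin u ^ 2))) ∧
    (∀ u : ℝ, (1 / (1 + Real.sin u ^ 2) ^ ((3:ℝ)/2)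
        + Real.cos u / ((3 + 2 * Real.cos u) * Real.sqrt (1 + Real.sin u ^ 2)) = 0
      ↔ ∃ k : ℤ, u = Real.pi + 2 * k * Real.pi)) := by
  refine ⟨fun u => ?_, fun u => ?_, fun u => ?_⟩
  · rw [Real.cos_two_mul]; linarith [factor_pos u]
  · rw [H_formula]
    exact mul_nonneg (by linarith [Real.neg_one_le_cos u]) (quot_pos u).le
  · rw [H_formula, mul_eq_zero, or_iff_left (quot_pos u).ne']
    have h : 1 + Real.cos u = 0 ↔ Real.cos u = -1 := by
      constructor <;> intro h <;> linarith
    rw [h, Real.cos_eq_neg_one_iff]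
    constructor
    · rintro ⟨k, hk⟩
      exact ⟨k, by rw [← hk]; ring⟩
    · rintro ⟨k, hk⟩
      exact ⟨k, by rw [hk]; ring⟩
end

section
/- The quotient (∫₀^{2π} ((3 + 2cos u)/(1 + sin²u) + cos u) du) / (∫₀^{2π} √(1 + sin²u)·(3 + 2cos u) du) is greater than or equal to 1/2. Consequently, 1/2 − 2 times this quotient is strictly negative. -/
open Real intervalIntegral

lemma trig_poly_integral (a b k : ℝ) :
    ∫ u in (0:ℝ)..(2 * Real.pi),
      ((3 + 2 * Real.cos u) * (a + b * Real.sin u ^ 2) + k * Real.cos u)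
      = 2 * Real.pi * (3 * a + 3 * b / 2) := by
  have h : ∀ u ∈ Set.uIcc (0:ℝ) (2 * Real.pi), HasDerivAt
      (fun u : ℝ => 3 * a * u + 3 * b * (u / 2 - Real.sin u * Real.cos u / 2)
        + (2 * a + k) * Real.sin u + 2 * b / 3 * Real.sin u ^ 3)
      ((3 + 2 * Real.cos u) * (a + b * Real.sin u ^ 2) + k * Real.cos u) u := by
    intro u _
    have hs := Real.hasDerivAt_sin u
    have hc := Real.hasDerivAt_cos u
    have hi := hasDerivAt_id u
    have := (((hi.const_mul (3 * a)).add
      (((hi.div_const 2).sub ((hs.mul hc).div_const 2)).const_mul (3 * b))).add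
      (hs.const_mul (2 * a + k))).add ((hs.pow 3).const_mul (2 * b / 3))
    refine this.congr_deriv ?_
    have h2 : Real.cos u * Real.cos u = 1 - Real.sin u ^ 2 := by
      have := Real.sin_sq_add_cos_sq u
      linarith [sq (Real.cos u)]
    rw [h2]
    push_cast
    ring
  rw [integral_eq_sub_of_hasDerivAt h (Continuous.intervalIntegrable (by fun_prop) _ _)]
  simp
  ring

/-- The average mean curvature `H̄` of the torus of revolution with elliptic
section satisfies `H̄ ≥ 1/2`, hence `1/2 - 2H̄ < 0`: mean convexity is
instantaneously lost at the inner equator under the volume preserving mean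
curvature flow. -/
theorem torus_average_mean_curvature_ge_half :
    (1:ℝ) / 2 ≤
      (∫ u in (0:ℝ)..(2 * Real.pi),
          ((3 + 2 * Real.cos u) / (1 + Real.sin u ^ 2) + Real.cos u)) /
        (∫ u in (0:ℝ)..(2 * Real.pi),
          Real.sqrt (1 + Real.sin u ^ 2) * (3 + 2 * Real.cos u)) ∧
    (1:ℝ) / 2 - 2 *
      ((∫ u in (0:ℝ)..(2 * Real.pi),
          ((3 + 2 * Real.cos u) / (1 + Real.sin u ^ 2) + Real.cos u)) /
        (∫ u in (0:ℝ)..(2 * Real.pi),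
          Real.sqrt (1 + Real.sin u ^ 2) * (3 + 2 * Real.cos u))) < 0 := by
  have hpi := Real.pi_pos
  have hle : (0:ℝ) ≤ 2 * Real.pi := by linarith
  have hpos : ∀ u : ℝ, 0 < 3 + 2 * Real.cos u := fun u => by
    linarith [Real.neg_one_le_cos u]
  have hden : ∀ u : ℝ, 0 < 1 + Real.sin u ^ 2 := fun u => by positivity
  have hcN : Continuous fun u : ℝ =>
      (3 + 2 * Real.cos u) / (1 + Real.sin u ^ 2) + Real.cos u :=
    (Continuous.div (by fun_prop) (by fun_prop) fun u => (hden u).ne').add Real.continuous_cos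
  have hcD : Continuous fun u : ℝ =>
      Real.sqrt (1 + Real.sin u ^ 2) * (3 + 2 * Real.cos u) := by fun_prop
  have hN : 2 * Real.pi * (3 * (8 / 9) + 3 * (-4 / 9) / 2) ≤
      ∫ u in (0:ℝ)..(2 * Real.pi),
          ((3 + 2 * Real.cos u) / (1 + Real.sin u ^ 2) + Real.cos u) := by
    rw [← trig_poly_integral (8 / 9) (-4 / 9) 1]
    refine integral_mono_on hle (Continuous.intervalIntegrable (by fun_prop) _ _)
      (hcN.intervalIntegrable _ _) fun u _ => ?_
    rw [one_mul, div_eq_mul_inv (3 + 2 * Real.cos u)]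
    have : 8 / 9 + -4 / 9 * Real.sin u ^ 2 ≤ (1 + Real.sin u ^ 2)⁻¹ := by
      rw [← one_div, le_div_iff₀ (hden u)]
      nlinarith [sq_nonneg (Real.sin u ^ 2 - 1 / 2)]
    have := mul_le_mul_of_nonneg_left this (hpos u).le
    linarith
  have hD : (∫ u in (0:ℝ)..(2 * Real.pi),
          Real.sqrt (1 + Real.sin u ^ 2) * (3 + 2 * Real.cos u)) ≤
      2 * Real.pi * (3 * (41 / 40) + 3 * (2 / 5) / 2) := by
    rw [← trig_poly_integral (41 / 40) (2 / 5) 0]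
    refine integral_mono_on hle (hcD.intervalIntegrable _ _)
      (Continuous.intervalIntegrable (by fun_prop) _ _) fun u _ => ?_
    have : Real.sqrt (1 + Real.sin u ^ 2) ≤ 41 / 40 + 2 / 5 * Real.sin u ^ 2 := by
      have h1 := Real.sq_sqrt (hden u).le
      nlinarith [sq_nonneg (Real.sqrt (1 + Real.sin u ^ 2) - 5 / 4)]
    have := mul_le_mul_of_nonneg_left this (hpos u).le
    linarith
  have hD0 : 0 < ∫ u in (0:ℝ)..(2 * Real.pi),
          Real.sqrt (1 + Real.sin u ^ 2) * (3 + 2 * Real.cos u) :=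
    intervalIntegral_pos_of_pos (hcD.intervalIntegrable _ _)
      (fun u => mul_pos (Real.sqrt_pos.2 (hden u)) (hpos u)) (by linarith)
  have key := (le_div_iff₀ hD0).2 (le_trans (b := 4 * Real.pi) (a := (1:ℝ) / 2 * _) (by linarith)
    (le_trans (by linarith) hN))
  exact ⟨key, by linarith⟩
end

section
/- Let r(u) = 2cosh²u and z(u) = 4 sinh u. Then for every real u: (z''(u)·r'(u) − r''(u)·z'(u)) / (r'(u)² + z'(u)²)^{3/2} = −1/(4 cosh³u), and z'(u) / (r(u)·√(r'(u)² + z'(u)²)) = 1/(2 cosh³u). -/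
open Real

/-- Principal curvatures of the paraboloidal neck in `ℝ⁴` generated by rotating
the curve `(r(u), z(u)) = (2cosh²u, 4sinh u)`: the profile principal curvature
equals `-1/(4cosh³u)` and the rotational ones equal `1/(2cosh³u)`. -/
theorem paraboloid_principal_curvatures (u : ℝ) :
    (deriv (deriv (fun w => 4 * Real.sinh w)) u * deriv (fun w => 2 * Real.cosh w ^ 2) u
        - deriv (deriv (fun w => 2 * Real.cosh w ^ 2)) u * deriv (fun w => 4 * Real.sinh w) u)
      / ((deriv (fun w => 2 * Real.cosh w ^ 2) u) ^ 2
          + (deriv (fun w => 4 * Real.sinh w) u) ^ 2) ^ ((3:ℝ)/2)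
      = -(1 / (4 * Real.cosh u ^ 3)) ∧
    deriv (fun w => 4 * Real.sinh w) u
      / ((2 * Real.cosh u ^ 2) *
          Real.sqrt ((deriv (fun w => 2 * Real.cosh w ^ 2) u) ^ 2
            + (deriv (fun w => 4 * Real.sinh w) u) ^ 2))
      = 1 / (2 * Real.cosh u ^ 3) := by
  have hz : deriv (fun w => 4 * Real.sinh w) = fun w => 4 * Real.cosh w := by
    funext x
    exact ((Real.hasDerivAt_sinh x).const_mul 4).deriv
  have hz2 : deriv (fun w => 4 * Real.cosh w) u = 4 * Real.sinh u :=
    ((Real.hasDerivAt_cosh u).const_mul 4).deriv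
  have hr : deriv (fun w => 2 * Real.cosh w ^ 2)
      = fun w => 4 * (Real.cosh w * Real.sinh w) := by
    funext x
    have h := (((Real.hasDerivAt_cosh x).pow 2).const_mul 2).deriv
    refine Eq.trans h ?_
    push_cast
    ring
  have hr2 : deriv (fun w => 4 * (Real.cosh w * Real.sinh w)) u
      = 4 * (Real.sinh u * Real.sinh u + Real.cosh u * Real.cosh u) :=
    (((Real.hasDerivAt_cosh u).mul (Real.hasDerivAt_sinh u)).const_mul 4).deriv
  have hc : 0 < Real.cosh u := Real.cosh_pos u
  have hs : (4 * (Real.cosh u * Real.sinh u)) ^ 2 + (4 * Real.cosh u) ^ 2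
      = (4 * Real.cosh u ^ 2) ^ 2 := by
    linear_combination (-16 * Real.cosh u ^ 2) * Real.cosh_sq u
  have hp : ((4 * Real.cosh u ^ 2) ^ 2) ^ ((3:ℝ)/2) = (4 * Real.cosh u ^ 2) ^ 3 := by
    rw [← Real.rpow_natCast, ← Real.rpow_mul (by positivity), ← Real.rpow_natCast _ 3]
    norm_num
  rw [hz, hr]
  simp only [hz2, hr2, hs, hp]
  rw [Real.sqrt_sq (by positivity)]
  constructor
  · field_simp
    ring
  · field_simp
end

section
/- Let r(u) = 2cosh²u and z(u) = 4 sinh u. Then for every real u: 2·r(u)·(r'(u)·z''(u) − r''(u)·z'(u)) + z'(u)·(r'(u)² + z'(u)²) = 0. -/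
open Real

/-- The paraboloidal neck in `ℝ⁴` generated by rotating the curve
`(r(u), z(u)) = (2cosh²u, 4sinh u)` around the `x₄`-axis is scalar flat:
`2r(r'z'' - r''z') + z'(r'² + z'²) = 0`. -/
theorem paraboloid_scalar_flat (u : ℝ) :
    2 * (2 * Real.cosh u ^ 2) *
        (deriv (fun w => 2 * Real.cosh w ^ 2) u * deriv (deriv (fun w => 4 * Real.sinh w)) u
          - deriv (deriv (fun w => 2 * Real.cosh w ^ 2)) u * deriv (fun w => 4 * Real.sinh w) u)
      + deriv (fun w => 4 * Real.sinh w) u *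
          ((deriv (fun w => 2 * Real.cosh w ^ 2) u) ^ 2
            + (deriv (fun w => 4 * Real.sinh w) u) ^ 2) = 0 := by
  have h1 : deriv (fun w => 2 * Real.cosh w ^ 2) = fun w => 4 * (Real.cosh w * Real.sinh w) := by
    funext w
    have h := (((Real.hasDerivAt_cosh w).pow 2).const_mul 2).deriv
    refine Eq.trans h ?_
    norm_num
    ring
  have h2 : deriv (fun w => 4 * Real.sinh w) = fun w => 4 * Real.cosh w := by
    funext w
    exact ((Real.hasDerivAt_sinh w).const_mul 4).deriv
  have h3 : deriv (fun w => 4 * (Real.cosh w * Real.sinh w)) u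
      = 4 * (Real.sinh u * Real.sinh u + Real.cosh u * Real.cosh u) :=
    (((Real.hasDerivAt_cosh u).mul (Real.hasDerivAt_sinh u)).const_mul 4).deriv
  have h4 : deriv (fun w => 4 * Real.cosh w) u = 4 * Real.sinh u :=
    ((Real.hasDerivAt_cosh u).const_mul 4).deriv
  rw [h1, h2, h3, h4]
  have h5 := Real.cosh_sq u
  linear_combination (-64 * Real.cosh u ^ 3) * h5
end

section
/- Let r(u) = 2cosh²u and z(u) = 4 sinh u, let I be an interval contained in (0, ∞), and let ψ : ℝ → ℝ be twice differentiable on I with 0 < ψ(u) < 1, ψ'(u) < 0 and ψ''(u) < 0 for all u ∈ I. Then the function ρ := r·ψ satisfies, for every u ∈ I: 2·ρ(u)·(ρ'(u)·z''(u) − ρ''(u)·z'(u)) + z'(u)·(ρ'(u)² + z'(u)²) > 0. -/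
open Real Set

/-- Bending the scalar-flat paraboloidal neck `(r(u), z(u)) = (2cosh²u, 4sinh u)`
by a decreasing concave factor `ψ` with values in `(0,1)` produces strictly
positive scalar curvature: `S(ρ) = 2ρ(ρ'z'' - ρ''z') + z'(ρ'² + z'²) > 0` for
`ρ = r·ψ`. -/
theorem bent_paraboloid_positive_scalar_curvature
    (I : Set ℝ) (hIint : I.OrdConnected) (hIpos : I ⊆ Ioi 0) (ψ : ℝ → ℝ)
    (hψ : ∀ u ∈ I, DifferentiableAt ℝ ψ u)
    (hψ' : ∀ u ∈ I, DifferentiableAt ℝ (deriv ψ) u)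
    (hψpos : ∀ u ∈ I, 0 < ψ u)
    (hψlt : ∀ u ∈ I, ψ u < 1)
    (hψdec : ∀ u ∈ I, deriv ψ u < 0)
    (hψconc : ∀ u ∈ I, deriv (deriv ψ) u < 0) :
    ∀ u ∈ I,
      0 < 2 * ((2 * Real.cosh u ^ 2) * ψ u) *
            (deriv (fun w => 2 * Real.cosh w ^ 2 * ψ w) u
                * deriv (deriv (fun w => 4 * Real.sinh w)) u
              - deriv (deriv (fun w => 2 * Real.cosh w ^ 2 * ψ w)) u
                * deriv (fun w => 4 * Real.sinh w) u)
          + deriv (fun w => 4 * Real.sinh w) u *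
              ((deriv (fun w => 2 * Real.cosh w ^ 2 * ψ w) u) ^ 2
                + (deriv (fun w => 4 * Real.sinh w) u) ^ 2) := by
  intro u hu
  have hu0 : 0 < u := hIpos hu
  have hz1 : deriv (fun w => 4 * Real.sinh w) = fun w => 4 * Real.cosh w := by
    funext w
    exact ((Real.hasDerivAt_sinh w).const_mul 4).deriv
  have hz2 : deriv (fun w => 4 * Real.cosh w) u = 4 * Real.sinh u :=
    ((Real.hasDerivAt_cosh u).const_mul 4).deriv
  -- `ψ` is differentiable near `u` since `deriv ψ` is continuous and nonzero at `u`
  have hev : ∀ᶠ w in nhds u, DifferentiableAt ℝ ψ w := by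
    have h := (hψ' u hu).continuousAt.eventually_ne (hψdec u hu).ne
    filter_upwards [h] with w hw
    exact differentiableAt_of_deriv_ne_zero hw
  have hsq : ∀ w, HasDerivAt (fun w => 2 * Real.cosh w ^ 2)
      (4 * Real.cosh w * Real.sinh w) w := by
    intro w
    refine (((Real.hasDerivAt_cosh w).pow 2).const_mul 2).congr_deriv ?_
    norm_num
    ring
  have hr1 : ∀ w, DifferentiableAt ℝ ψ w → deriv (fun w => 2 * Real.cosh w ^ 2 * ψ w) w
      = 4 * Real.cosh w * Real.sinh w * ψ w + 2 * Real.cosh w ^ 2 * deriv ψ w :=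
    fun w hw => ((hsq w).mul hw.hasDerivAt).deriv
  have hr2 : deriv (deriv (fun w => 2 * Real.cosh w ^ 2 * ψ w)) u
      = 4 * (Real.sinh u ^ 2 + Real.cosh u ^ 2) * ψ u
        + 8 * Real.cosh u * Real.sinh u * deriv ψ u
        + 2 * Real.cosh u ^ 2 * deriv (deriv ψ) u := by
    have he : deriv (fun w => 2 * Real.cosh w ^ 2 * ψ w) =ᶠ[nhds u]
        fun w => 4 * Real.cosh w * Real.sinh w * ψ w + 2 * Real.cosh w ^ 2 * deriv ψ w := by
      filter_upwards [hev] with w hw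
      exact hr1 w hw
    rw [he.deriv_eq]
    have h1 := (((Real.hasDerivAt_cosh u).const_mul 4).mul (Real.hasDerivAt_sinh u)).mul
      (hψ u hu).hasDerivAt
    have h2 := (hsq u).mul (hψ' u hu).hasDerivAt
    refine ((h1.add h2).congr_deriv ?_).deriv
    simp only [Pi.mul_apply]
    ring
  rw [hr2, hz1, hz2, hr1 u (hψ u hu)]
  beta_reduce
  have hp := hψpos u hu
  have hl := hψlt u hu
  have hd := hψdec u hu
  have hc := hψconc u hu
  have hC := Real.cosh_pos u
  have hS : 0 < Real.sinh u := Real.sinh_pos_iff.2 hu0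
  have hCS := Real.cosh_sq u
  generalize deriv (deriv ψ) u = c at *
  generalize deriv ψ u = d at *
  generalize ψ u = p at *
  generalize Real.cosh u = C at *
  generalize Real.sinh u = S at *
  have key : 0 < 64 * C ^ 3 * ((1 - p) * (1 + p)) + 32 * C ^ 4 * S * p * (-d)
      + 32 * C ^ 5 * p * (-c) + 16 * C ^ 5 * d ^ 2 := by
    have h1 : 0 < 1 - p := by linarith
    have h2 : 0 < -d := by linarith
    have h3 : 0 < -c := by linarith
    positivity
  refine key.trans_eq ?_
  linear_combination (64 * C ^ 3 * p ^ 2) * hCS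
end

section
/- Let r(u) = 2cosh²u and z(u) = 4 sinh u, let I be an interval contained in (0, ∞), and let ψ : ℝ → ℝ be twice differentiable on I with 0 < ψ(u) < 1, ψ'(u) < 0 and ψ''(u) < 0 for all u ∈ I. Then the function ρ := r·ψ satisfies, for every u ∈ I: ρ(u)·(ρ'(u)·z''(u) − ρ''(u)·z'(u)) + 2·z'(u)·(ρ'(u)² + z'(u)²) > 0. -/
open Real Set

/-- The bent paraboloidal neck (the scalar-flat neck `(r(u), z(u)) =
(2cosh²u, 4sinh u)` deformed by a decreasing concave factor `ψ` with values in
`(0,1)`) is mean convex: `ρ(ρ'z'' - ρ''z') + 2z'(ρ'² + z'²) > 0` for `ρ = r·ψ`. -/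
theorem bent_paraboloid_mean_convex
    (I : Set ℝ) (hIint : I.OrdConnected) (hIpos : I ⊆ Ioi 0) (ψ : ℝ → ℝ)
    (hψ : ∀ u ∈ I, DifferentiableAt ℝ ψ u)
    (hψ' : ∀ u ∈ I, DifferentiableAt ℝ (deriv ψ) u)
    (hψpos : ∀ u ∈ I, 0 < ψ u)
    (hψlt : ∀ u ∈ I, ψ u < 1)
    (hψdec : ∀ u ∈ I, deriv ψ u < 0)
    (hψconc : ∀ u ∈ I, deriv (deriv ψ) u < 0) :
    ∀ u ∈ I,
      0 < ((2 * Real.cosh u ^ 2) * ψ u) *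
            (deriv (fun w => 2 * Real.cosh w ^ 2 * ψ w) u
                * deriv (deriv (fun w => 4 * Real.sinh w)) u
              - deriv (deriv (fun w => 2 * Real.cosh w ^ 2 * ψ w)) u
                * deriv (fun w => 4 * Real.sinh w) u)
          + 2 * deriv (fun w => 4 * Real.sinh w) u *
              ((deriv (fun w => 2 * Real.cosh w ^ 2 * ψ w) u) ^ 2
                + (deriv (fun w => 4 * Real.sinh w) u) ^ 2) := by
  intro u hu
  have hz1 : deriv (fun w => 4 * Real.sinh w) = fun w => 4 * Real.cosh w := by
    funext w
    exact ((Real.hasDerivAt_sinh w).const_mul 4).deriv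
  have hz2 : deriv (fun w => 4 * Real.cosh w) u = 4 * Real.sinh u :=
    ((Real.hasDerivAt_cosh u).const_mul 4).deriv
  -- first derivative of the deformed radius wherever `ψ` is differentiable
  have hr : ∀ w, HasDerivAt (fun w => 2 * Real.cosh w ^ 2)
      (4 * Real.cosh w * Real.sinh w) w := by
    intro w
    have h := ((Real.hasDerivAt_cosh w).pow 2).const_mul 2
    have e : 2 * (((2 : ℕ) : ℝ) * Real.cosh w ^ (2 - 1) * Real.sinh w)
        = 4 * Real.cosh w * Real.sinh w := by
      norm_num
      ring
    rw [← e]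
    exact h
  have h1 : ∀ w, DifferentiableAt ℝ ψ w → deriv (fun w => 2 * Real.cosh w ^ 2 * ψ w) w
      = 4 * Real.cosh w * Real.sinh w * ψ w + 2 * Real.cosh w ^ 2 * deriv ψ w := by
    intro w hw
    exact ((hr w).mul hw.hasDerivAt).deriv
  -- `ψ' < 0` near `u`, hence `ψ` is differentiable near `u`
  have hev : ∀ᶠ w in nhds u, DifferentiableAt ℝ ψ w := by
    have h := (hψ' u hu).continuousAt.eventually_lt
      (continuousAt_const (y := (0 : ℝ))) (hψdec u hu)
    filter_upwards [h] with w hw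
    exact differentiableAt_of_deriv_ne_zero hw.ne
  have h2 : deriv (deriv (fun w => 2 * Real.cosh w ^ 2 * ψ w)) u
      = 4 * (Real.cosh u ^ 2 + Real.sinh u ^ 2) * ψ u
        + 8 * Real.cosh u * Real.sinh u * deriv ψ u
        + 2 * Real.cosh u ^ 2 * deriv (deriv ψ) u := by
    have he : deriv (fun w => 2 * Real.cosh w ^ 2 * ψ w) =ᶠ[nhds u] fun w =>
        4 * Real.cosh w * Real.sinh w * ψ w + 2 * Real.cosh w ^ 2 * deriv ψ w := by
      filter_upwards [hev] with w hw
      exact h1 w hw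
    rw [he.deriv_eq]
    have hA := (((Real.hasDerivAt_cosh u).const_mul 4).mul (Real.hasDerivAt_sinh u)).mul
      (hψ u hu).hasDerivAt
    have hB := (hr u).mul (hψ' u hu).hasDerivAt
    refine (hA.add hB).deriv.trans ?_
    simp only [Pi.mul_apply]
    ring
  rw [h2, h1 u (hψ u hu), hz1, hz2]
  beta_reduce
  have hp := hψpos u hu
  have hp1 := hψlt u hu
  have ht := hψconc u hu
  have hc := Real.cosh_pos u
  have hcs := Real.cosh_sq u
  generalize Real.cosh u = c at *
  generalize Real.sinh u = s at *
  generalize deriv (deriv ψ) u = t at *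
  generalize deriv ψ u = q at *
  generalize ψ u = p at *
  have key : 0 < 8 * s ^ 2 * p ^ 2 - 2 * c ^ 2 * p ^ 2 + 8 + 5 * (s * p) * (c * q)
      + 2 * (c * q) ^ 2 + c ^ 2 * (p * (-t)) := by
    have k1 : 0 < c ^ 2 * (p * (-t)) := by
      have : 0 < -t := by linarith
      positivity
    have k2 : p ^ 2 < 1 := by nlinarith
    rw [hcs] at k1 ⊢
    nlinarith [sq_nonneg (5 * (s * p) + 4 * (c * q)), sq_nonneg (s * p)]
  have hm : 0 < 16 * c ^ 3 * (8 * s ^ 2 * p ^ 2 - 2 * c ^ 2 * p ^ 2 + 8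
      + 5 * (s * p) * (c * q) + 2 * (c * q) ^ 2 + c ^ 2 * (p * (-t))) := by
    positivity
  refine hm.trans_eq ?_
  ring
end
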